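/- Fix E₀ > 0 and let φ : ℝ → ℝ be continuous, bounded, and nonnegative with φ(x) = 0 for x < 0, and suppose there exists δ ∈ (0,1] with φ(x) > 0 for all x ∈ (0, δ). Define ξ_κ(V) = (4π/V) ∫_V^{E₀} φ(1 − E/E₀)(E²/V² − 1)^κ dE for κ ∈ {3/2, 1/2, −1/2}, and set ρ(V) = ξ_{3/2}(V) + ξ_{1/2}(V) and p(V) = (1/3) ξ_{3/2}(V). Then for every V ∈ (0, E₀), ρ′(V)/p′(V) = 3·(1 + (2 ξ_{1/2}(V) + ξ_{−1/2}(V)) / (4 ξ_{3/2}(V) + 3 ξ_{1/2}(V))). -/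

import Mathlib

open MeasureTheory

/-!
Everything follows from `V ξ_κ' = -((1 + 2 κ) ξ_κ + 2 κ ξ_{κ-1})` for `κ > 0`. Differentiating
the integral defining `ξ_κ` under the integral sign fails for `κ < 1`, because the singularity of
`(E² / V² - 1) ^ (κ - 1)` at `E = V` moves with `V`. Substituting `E = V u` fixes it at `u = 1`
but puts `V` into the profile, as `f (V u)`, and `f` need not be differentiable. So one
integrates by parts first, replacing `f` by its primitive `F` vanishing at `E₀`:
`V ∫ f (V u) w u du = -∫ F (V u) w' u du` with `w u = (u² - 1) ^ κ`. As `F` is Lipschitz and `w'`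
is integrable, dominated convergence then gives the derivative `-∫ u f (V u) w' u du`, and
`u w' u = 2 κ ((u² - 1) ^ κ + (u² - 1) ^ (κ - 1))`.
-/

open Set Filter Topology Real

section Dilation

variable {f w : ℝ → ℝ} {a b c M V : ℝ}

lemma ae_comp_mul_left {P : ℝ → Prop} (hP : ∀ᵐ x, P x) (hV : V ≠ 0) : ∀ᵐ u, P (V * u) := by
  refine Measure.QuasiMeasurePreserving.ae ⟨measurable_const_mul V, ?_⟩ hP
  rw [Real.map_volume_mul_left hV]
  exact Measure.smul_absolutelyContinuous

lemma intervalIntegrable_of_abs_le (hf : Measurable f) (hM : ∀ x, |f x| ≤ M) :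
    IntervalIntegrable f volume a b :=
  (intervalIntegrable_const (c := M)).mono_fun' hf.aestronglyMeasurable (.of_forall hM)

lemma intervalIntegrable_bdd_mul (hf : Measurable f) (hM : ∀ x, |f x| ≤ M)
    (hw : IntervalIntegrable w volume a b) :
    IntervalIntegrable (fun u => f u * w u) volume a b :=
  intervalIntegrable_iff.2 <|
    hw.def'.bdd_mul hf.aestronglyMeasurable (.of_forall hM)

lemma lipschitzWith_integral_of_abs_le (hf : Measurable f) (hM : ∀ x, |f x| ≤ M) :
    LipschitzWith M.toNNReal fun x => ∫ t in c..x, f t := by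
  refine LipschitzWith.of_dist_le_mul fun x y => ?_
  rw [dist_comm, dist_eq_norm, dist_comm, Real.dist_eq,
    Real.coe_toNNReal _ ((abs_nonneg _).trans (hM 0)),
    intervalIntegral.integral_interval_sub_left (intervalIntegrable_of_abs_le hf hM)
      (intervalIntegrable_of_abs_le hf hM)]
  exact intervalIntegral.norm_integral_le_of_norm_le_const fun t _ => hM t

lemma ae_deriv_integral_eq_of_abs_le (hf : Measurable f) (hM : ∀ x, |f x| ≤ M) (c : ℝ) :
    ∀ᵐ x, deriv (fun x => ∫ t in c..x, f t) x = f x := by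
  have hloc : LocallyIntegrable f volume :=
    (locallyIntegrable_const M).mono hf.aestronglyMeasurable
      (.of_forall fun x => (hM x).trans (le_abs_self M))
  exact (LocallyIntegrable.ae_hasDerivAt_integral hloc).mono fun x hx => (hx c).deriv

lemma hasDerivAt_integral_comp_mul_left_mul {K : NNReal} {G : ℝ → ℝ} (hG : LipschitzWith K G)
    (hw : IntervalIntegrable w volume a b) (hV : V ≠ 0) :
    HasDerivAt (fun W => ∫ u in a..b, G (W * u) * w u)
      (∫ u in a..b, u * deriv G (V * u) * w u) V := by
  have hint (W : ℝ) : IntervalIntegrable (fun u => G (W * u) * w u) volume a b :=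
    hw.continuousOn_mul (hG.continuous.comp (continuous_const_mul W)).continuousOn
  refine (intervalIntegral.hasDerivAt_integral_of_dominated_loc_of_lip
    (bound := fun u => K * |u| * |w u|) univ_mem
    (.of_forall fun W => (hint W).def'.aestronglyMeasurable) (hint V) ?_
    (.of_forall fun u _ => ?_) ?_ ?_).2
  · exact (measurable_id.mul ((measurable_deriv G).comp
      (measurable_const_mul V))).aestronglyMeasurable.mul hw.def'.aestronglyMeasurable
  · refine LipschitzOnWith.of_dist_le_mul fun x _ y _ => ?_
    calc dist (G (x * u) * w u) (G (y * u) * w u)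
        = dist (G (x * u)) (G (y * u)) * |w u| := by
          simp only [Real.dist_eq, ← sub_mul, abs_mul]
      _ ≤ K * dist (x * u) (y * u) * |w u| := by gcongr; exact hG.dist_le_mul _ _
      _ = Real.nnabs (K * |u| * |w u|) * dist x y := by
          simp only [Real.coe_nnabs, Real.dist_eq, ← sub_mul, abs_mul, abs_abs, NNReal.abs_eq]
          ring
  · exact hw.abs.continuousOn_mul (by fun_prop)
  · filter_upwards [ae_comp_mul_left hG.ae_differentiableAt_real hV] with u hu _
    have := hu.hasDerivAt.comp V ((hasDerivAt_id V).mul_const u)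
    simpa [mul_comm] using this.mul_const (w u)

lemma hasDerivAt_mul_integral_comp_mul_left_mul (hf : Measurable f) (hM : ∀ x, |f x| ≤ M)
    (hf0 : ∀ x, c < x → f x = 0) (hw : AbsolutelyContinuousOnInterval w a b) (hwa : w a = 0)
    (hV : V ≠ 0) (hcV : c < V * b) :
    HasDerivAt (fun W => W * ∫ u in a..b, f (W * u) * w u)
      (-∫ u in a..b, u * f (V * u) * deriv w u) V := by
  set F : ℝ → ℝ := fun x => ∫ t in c..x, f t
  have hFlip : LipschitzWith M.toNNReal F := lipschitzWith_integral_of_abs_le hf hM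
  have hFderiv : ∀ᵐ x, deriv F x = f x := ae_deriv_integral_eq_of_abs_le hf hM c
  have hF0 (x : ℝ) (hx : c < x) : F x = 0 := by
    refine intervalIntegral.integral_zero_ae (.of_forall fun t ht => hf0 t ?_)
    rw [uIoc_of_le hx.le] at ht
    exact ht.1
  have hparts (W : ℝ) (hW : W ≠ 0) (hcW : c < W * b) :
      W * ∫ u in a..b, f (W * u) * w u = -∫ u in a..b, F (W * u) * deriv w u := by
    have hFW : AbsolutelyContinuousOnInterval (fun u => F (W * u)) a b :=
      (hFlip.comp (lipschitzWith_smul W)).lipschitzOnWith.absolutelyContinuousOnInterval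
    rw [hFW.integral_mul_deriv_eq_deriv_mul hw, hF0 _ hcW, hwa,
      ← intervalIntegral.integral_const_mul]
    simp only [zero_mul, mul_zero, sub_zero, zero_sub, neg_neg]
    refine intervalIntegral.integral_congr_ae ?_
    filter_upwards [ae_comp_mul_left hFderiv hW] with u hu _
    rw [deriv_comp_mul_left, hu, smul_eq_mul, mul_assoc]
  have hderiv := (hasDerivAt_integral_comp_mul_left_mul hFlip hw.intervalIntegrable_deriv hV).neg
  refine (hderiv.congr_of_eventuallyEq ?_).congr_deriv ?_
  · have hcW : ∀ᶠ W in 𝓝 V, c < W * b :=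
      (continuous_mul_const b).continuousAt.eventually (lt_mem_nhds hcV)
    filter_upwards [eventually_ne_nhds hV, hcW] with W using hparts W
  · refine congrArg Neg.neg (intervalIntegral.integral_congr_ae ?_)
    filter_upwards [ae_comp_mul_left hFderiv hV] with u hu _
    rw [hu]

end Dilation

lemma absolutelyContinuousOnInterval_of_hasDerivAt {f f' : ℝ → ℝ} {a b : ℝ} (hab : a ≤ b)
    (hf : ContinuousOn f (Icc a b)) (hderiv : ∀ x ∈ Ioo a b, HasDerivAt f (f' x) x)
    (hint : IntervalIntegrable f' volume a b) : AbsolutelyContinuousOnInterval f a b := by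
  have hprim : ∀ x ∈ uIcc a b, f x = f a + ∫ t in a..x, f' t := by
    intro x hx
    rw [uIcc_of_le hab] at hx
    rw [intervalIntegral.integral_eq_sub_of_hasDerivAt_of_le hx.1
      (hf.mono (Icc_subset_Icc_right hx.2)) (fun y hy => hderiv y ⟨hy.1, hy.2.trans_le hx.2⟩)
      (hint.mono_set (uIcc_subset_uIcc_left (by rwa [uIcc_of_le hab])))]
    ring
  have hac := hint.absolutelyContinuousOnInterval_intervalIntegral left_mem_uIcc
  refine hac.congr' (eventually_inf_principal.2 (.of_forall fun E hE => ?_))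
  refine Finset.sum_congr rfl fun i hi => ?_
  rw [hprim _ (hE.1 i hi).1, hprim _ (hE.1 i hi).2, dist_add_left]

section Weight

variable {κ u R : ℝ}

lemma intervalIntegrable_sq_sub_one_rpow (hκ : -1 < κ) (hR : 1 ≤ R) :
    IntervalIntegrable (fun u : ℝ => (u ^ 2 - 1) ^ κ) volume 1 R := by
  have hsub : IntervalIntegrable (fun u : ℝ => (u - 1) ^ κ) volume 1 R := by
    simpa using
      (intervalIntegral.intervalIntegrable_rpow' (a := 0) (b := R - 1) hκ).comp_sub_right 1
  have hadd : ContinuousOn (fun u : ℝ => (u + 1) ^ κ) (uIcc 1 R) := by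
    refine ContinuousOn.rpow_const (by fun_prop) fun u hu => Or.inl ?_
    rw [uIcc_of_le hR] at hu
    linarith [hu.1]
  refine (hsub.mul_continuousOn hadd).congr_uIoo fun u hu => ?_
  rw [uIoo_of_le hR] at hu
  calc (u - 1) ^ κ * (u + 1) ^ κ
      = ((u - 1) * (u + 1)) ^ κ :=
        (Real.mul_rpow (by linarith [hu.1]) (by linarith [hu.1])).symm
    _ = (u ^ 2 - 1) ^ κ := by ring_nf

lemma hasDerivAt_sq_sub_one_rpow (κ : ℝ) (hu : 1 < u) :
    HasDerivAt (fun u : ℝ => (u ^ 2 - 1) ^ κ) (2 * κ * u * (u ^ 2 - 1) ^ (κ - 1)) u := by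
  have hne : u ^ 2 - 1 ≠ 0 := by nlinarith
  refine (((hasDerivAt_pow 2 u).sub_const 1).rpow_const (p := κ) (Or.inl hne)).congr_deriv ?_
  push_cast
  ring

lemma mul_deriv_sq_sub_one_rpow (κ : ℝ) (hu : 1 < u) :
    u * deriv (fun u : ℝ => (u ^ 2 - 1) ^ κ) u =
      2 * κ * ((u ^ 2 - 1) ^ κ + (u ^ 2 - 1) ^ (κ - 1)) := by
  have hpos : 0 < u ^ 2 - 1 := by nlinarith
  have hκ : (u ^ 2 - 1) ^ κ = (u ^ 2 - 1) ^ (κ - 1) * (u ^ 2 - 1) := by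
    rw [← Real.rpow_add_one hpos.ne', sub_add_cancel]
  rw [(hasDerivAt_sq_sub_one_rpow κ hu).deriv, hκ]
  ring

lemma absolutelyContinuousOnInterval_sq_sub_one_rpow (hκ : 0 < κ) (hR : 1 ≤ R) :
    AbsolutelyContinuousOnInterval (fun u : ℝ => (u ^ 2 - 1) ^ κ) 1 R := by
  refine absolutelyContinuousOnInterval_of_hasDerivAt hR
    (ContinuousOn.rpow_const (by fun_prop) fun _ _ => Or.inr hκ.le)
    (fun u hu => hasDerivAt_sq_sub_one_rpow κ hu.1) ?_
  exact (intervalIntegrable_sq_sub_one_rpow (by linarith) hR).continuousOn_mul (by fun_prop)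

end Weight

/-- The moment integral `ξ_κ(V)`, as a functional of the energy profile `f`; the ansatz
function `φ` of the paper enters through `f E = φ (1 - E / E₀)`. -/
noncomputable def momentIntegral (f : ℝ → ℝ) (E₀ κ V : ℝ) : ℝ :=
  4 * π / V * ∫ E in V..E₀, f E * (E ^ 2 / V ^ 2 - 1) ^ κ

/-- The energy density `ρ(V)` of isotropic Vlasov matter with energy profile `f`. -/
noncomputable def energyDensity (f : ℝ → ℝ) (E₀ V : ℝ) : ℝ :=
  momentIntegral f E₀ (3 / 2) V + momentIntegral f E₀ (1 / 2) V

/-- The pressure `p(V)` of isotropic Vlasov matter with energy profile `f`. -/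
noncomputable def pressure (f : ℝ → ℝ) (E₀ V : ℝ) : ℝ :=
  1 / 3 * momentIntegral f E₀ (3 / 2) V

section MomentIntegral

variable {f : ℝ → ℝ} {E₀ κ M R V : ℝ}

lemma momentIntegral_eq_integral_comp_mul_left (f : ℝ → ℝ) (κ : ℝ) (hV : 0 < V) (hVE : V ≤ E₀)
    (hR : E₀ ≤ V * R) :
    momentIntegral f E₀ κ V =
      4 * π * ∫ u in (1 : ℝ)..R, (Iic E₀).indicator f (V * u) * (u ^ 2 - 1) ^ κ := by
  have hmem : E₀ / V ∈ Icc 1 R := ⟨(one_le_div hV).2 hVE, (div_le_iff₀' hV).2 hR⟩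
  have hcut (u : ℝ) : (Iic E₀).indicator f (V * u) * (u ^ 2 - 1) ^ κ =
      {u | u ≤ E₀ / V}.indicator (fun u => f (V * u) * ((V * u) ^ 2 / V ^ 2 - 1) ^ κ) u := by
    have hsq : (V * u) ^ 2 / V ^ 2 = u ^ 2 := by field_simp
    simp only [indicator_apply, mem_Iic, mem_ofPred_eq, le_div_iff₀' hV, hsq, ite_mul, zero_mul]
  simp only [hcut]
  rw [intervalIntegral.integral_indicator hmem,
    intervalIntegral.integral_comp_mul_left (fun E => f E * (E ^ 2 / V ^ 2 - 1) ^ κ) hV.ne',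
    mul_one, mul_div_cancel₀ _ hV.ne', smul_eq_mul, momentIntegral]
  ring

lemma integral_mul_mul_deriv_sq_sub_one_rpow (hκ : 0 < κ) (hf : Measurable f) (hM : ∀ x, |f x| ≤ M)
    (hR : 1 ≤ R) :
    ∫ u in (1 : ℝ)..R, u * f u * deriv (fun u : ℝ => (u ^ 2 - 1) ^ κ) u =
      2 * κ * ((∫ u in (1 : ℝ)..R, f u * (u ^ 2 - 1) ^ κ) +
        ∫ u in (1 : ℝ)..R, f u * (u ^ 2 - 1) ^ (κ - 1)) := by
  have hint {μ : ℝ} (hμ : -1 < μ) :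
      IntervalIntegrable (fun u => f u * (u ^ 2 - 1) ^ μ) volume 1 R :=
    intervalIntegrable_bdd_mul hf hM (intervalIntegrable_sq_sub_one_rpow hμ hR)
  rw [← intervalIntegral.integral_add (hint (by linarith)) (hint (by linarith)),
    ← intervalIntegral.integral_const_mul]
  refine intervalIntegral.integral_congr_Ioo_of_le hR fun u hu => ?_
  linear_combination f u * mul_deriv_sq_sub_one_rpow κ hu.1

theorem hasDerivAt_mul_momentIntegral (hκ : 0 < κ) (hf : Measurable f) (hM : ∀ x, |f x| ≤ M)
    (hV : V ∈ Ioo 0 E₀) :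
    HasDerivAt (fun W => W * momentIntegral f E₀ κ W)
      (-(2 * κ * (momentIntegral f E₀ κ V + momentIntegral f E₀ (κ - 1) V))) V := by
  obtain ⟨R, hR⟩ := exists_gt (E₀ / V)
  have hER : E₀ < V * R := (div_lt_iff₀' hV.1).1 hR
  have hR1 : 1 ≤ R := ((one_lt_div hV.1).2 hV.2).le.trans hR.le
  obtain ⟨g, hgf⟩ : ∃ g, g = (Iic E₀).indicator f := ⟨_, rfl⟩
  have hg : Measurable g := hgf ▸ hf.indicator measurableSet_Iic
  have hgM (x : ℝ) : |g x| ≤ M := hgf ▸ (norm_indicator_le_norm_self f x).trans (hM x)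
  have hg0 (x : ℝ) (hx : E₀ < x) : g x = 0 := hgf ▸ indicator_of_notMem (notMem_Iic.2 hx) f
  have hdil (μ : ℝ) {W : ℝ} (hW : W ∈ Ioo 0 E₀) (hEW : E₀ < W * R) : momentIntegral f E₀ μ W =
      4 * π * ∫ u in (1 : ℝ)..R, g (W * u) * (u ^ 2 - 1) ^ μ :=
    hgf ▸ momentIntegral_eq_integral_comp_mul_left f μ hW.1 hW.2.le hEW.le
  have hderiv := (hasDerivAt_mul_integral_comp_mul_left_mul hg hgM hg0
    (absolutelyContinuousOnInterval_sq_sub_one_rpow hκ hR1) (by simp [hκ.ne']) hV.1.ne'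
    hER).const_mul (4 * π)
  refine (hderiv.congr_of_eventuallyEq ?_).congr_deriv ?_
  · have hEW : ∀ᶠ W in 𝓝 V, E₀ < W * R :=
      (continuous_mul_const R).continuousAt.eventually (lt_mem_nhds hER)
    filter_upwards [Ioo_mem_nhds hV.1 hV.2, hEW] with W hW hEW
    rw [hdil κ hW hEW, mul_left_comm]
  · rw [integral_mul_mul_deriv_sq_sub_one_rpow hκ (f := fun u => g (V * u))
      (hg.comp (measurable_const_mul V)) (fun u => hgM (V * u)) hR1, hdil κ hV hER,
      hdil (κ - 1) hV hER]
    ring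

theorem hasDerivAt_momentIntegral (hκ : 0 < κ) (hf : Measurable f) (hM : ∀ x, |f x| ≤ M)
    (hV : V ∈ Ioo 0 E₀) :
    HasDerivAt (momentIntegral f E₀ κ)
      (-((1 + 2 * κ) * momentIntegral f E₀ κ V + 2 * κ * momentIntegral f E₀ (κ - 1) V) / V) V := by
  have hV0 : V ≠ 0 := hV.1.ne'
  have hquot := (hasDerivAt_mul_momentIntegral hκ hf hM hV).fun_div (hasDerivAt_id' V) hV0
  refine (hquot.congr_of_eventuallyEq ?_).congr_deriv ?_
  · filter_upwards [eventually_ne_nhds hV0] with W hW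
    rw [mul_div_cancel_left₀ _ hW]
  · field_simp
    ring

theorem momentIntegral_pos (hκ : -1 < κ) (hf : Measurable f) (hM : ∀ x, |f x| ≤ M)
    (hnn : ∀ x, 0 ≤ f x) (hV : 0 < V) (hsupp : 0 < volume (Function.support f ∩ Ioo V E₀)) :
    0 < momentIntegral f E₀ κ V := by
  obtain ⟨E, -, hVE, hEE⟩ := nonempty_of_measure_ne_zero hsupp.ne'
  have hVE₀ : V < E₀ := hVE.trans hEE
  have hweight (E : ℝ) (hE : V < E) : 0 < (E ^ 2 / V ^ 2 - 1) ^ κ := by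
    refine Real.rpow_pos_of_pos (sub_pos.2 ((one_lt_div (by positivity)).2 ?_)) κ
    gcongr
  have hint : IntervalIntegrable (fun E : ℝ => (E ^ 2 / V ^ 2 - 1) ^ κ) volume V E₀ := by
    have := (intervalIntegrable_sq_sub_one_rpow hκ ((one_le_div hV).2 hVE₀.le)).comp_mul_left
      (c := V⁻¹)
    simpa [hV.ne', div_eq_mul_inv, mul_pow, mul_comm] using this
  refine mul_pos (by positivity) ?_
  refine (intervalIntegral.integral_pos_iff_support_of_nonneg_ae' ?_
    (intervalIntegrable_bdd_mul hf hM hint)).2 ⟨hVE₀, hsupp.trans_le (measure_mono ?_)⟩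
  · refine (ae_restrict_iff' measurableSet_uIoc).2 (.of_forall fun E hE => ?_)
    rw [uIoc_of_le hVE₀.le] at hE
    exact mul_nonneg (hnn E) (hweight E hE.1).le
  · exact fun E hE => ⟨mul_ne_zero hE.1 (hweight E hE.2.1).ne', hE.2.1, hE.2.2.le⟩

theorem deriv_energyDensity_div_deriv_pressure (hf : Measurable f) (hM : ∀ x, |f x| ≤ M)
    (hV : V ∈ Ioo 0 E₀)
    (hne : 4 * momentIntegral f E₀ (3 / 2) V + 3 * momentIntegral f E₀ (1 / 2) V ≠ 0) :
    deriv (energyDensity f E₀) V / deriv (pressure f E₀) V =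
      3 * (1 + (2 * momentIntegral f E₀ (1 / 2) V + momentIntegral f E₀ (-1 / 2) V) /
        (4 * momentIntegral f E₀ (3 / 2) V + 3 * momentIntegral f E₀ (1 / 2) V)) := by
  have hV0 : V ≠ 0 := hV.1.ne'
  have h32 : HasDerivAt (momentIntegral f E₀ (3 / 2))
      (-(4 * momentIntegral f E₀ (3 / 2) V + 3 * momentIntegral f E₀ (1 / 2) V) / V) V := by
    convert hasDerivAt_momentIntegral (κ := 3 / 2) (by norm_num) hf hM hV using 5 <;> norm_num
  have h12 : HasDerivAt (momentIntegral f E₀ (1 / 2))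
      (-(2 * momentIntegral f E₀ (1 / 2) V + momentIntegral f E₀ (-1 / 2) V) / V) V := by
    convert hasDerivAt_momentIntegral (κ := 1 / 2) (by norm_num) hf hM hV using 5 <;> norm_num
  have hρ : deriv (energyDensity f E₀) V = _ := (h32.add h12).deriv
  have hp : deriv (pressure f E₀) V = _ := (h32.const_mul (1 / 3)).deriv
  rw [hρ, hp]
  field_simp
  ring

end MomentIntegral

lemma volume_support_comp_one_sub_div_inter_Ioo_pos {φ : ℝ → ℝ} {E₀ V δ : ℝ} (hE₀ : 0 < E₀)
    (hVE : V < E₀) (hδ : 0 < δ) (hpos : ∀ x ∈ Ioo 0 δ, 0 < φ x) :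
    0 < volume (Function.support (fun E => φ (1 - E / E₀)) ∩ Ioo V E₀) := by
  have hlt : max V (E₀ * (1 - δ)) < E₀ := max_lt hVE (by nlinarith)
  have hsub : Ioo (max V (E₀ * (1 - δ))) E₀ ⊆
      Function.support (fun E => φ (1 - E / E₀)) ∩ Ioo V E₀ := by
    rintro E ⟨hE, hEE₀⟩
    obtain ⟨hVE, hδE⟩ := max_lt_iff.1 hE
    refine ⟨(hpos _ ⟨sub_pos.2 ((div_lt_one hE₀).2 hEE₀), ?_⟩).ne', hVE, hEE₀⟩
    rw [sub_lt_comm, lt_div_iff₀' hE₀]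
    exact hδE
  exact ((Measure.measure_Ioo_pos volume).2 hlt).trans_le (measure_mono hsub)

theorem stmt_12_general {E₀ : ℝ} (hE₀ : 0 < E₀) {φ : ℝ → ℝ} (hφ : Measurable φ)
    (hbd : ∃ M, ∀ x, |φ x| ≤ M) (hnn : ∀ x, 0 ≤ φ x)
    {δ : ℝ} (hδ : 0 < δ) (hpos : ∀ x ∈ Ioo 0 δ, 0 < φ x)
    {ξ : ℝ → ℝ → ℝ}
    (hξ : ∀ κ V, ξ κ V =
      (4 * Real.pi / V) * ∫ E in V..E₀, φ (1 - E / E₀) * (E ^ 2 / V ^ 2 - 1) ^ κ)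
    {ρ p : ℝ → ℝ}
    (hρ : ∀ V, ρ V = ξ (3 / 2) V + ξ (1 / 2) V)
    (hp : ∀ V, p V = (1 / 3) * ξ (3 / 2) V) {V : ℝ} (hV : V ∈ Ioo 0 E₀) :
    deriv ρ V / deriv p V =
      3 * (1 + (2 * ξ (1 / 2) V + ξ (-1 / 2) V) / (4 * ξ (3 / 2) V + 3 * ξ (1 / 2) V)) := by
  obtain rfl : ξ = momentIntegral (fun E => φ (1 - E / E₀)) E₀ := funext₂ hξ
  obtain rfl : ρ = energyDensity (fun E => φ (1 - E / E₀)) E₀ := funext hρ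
  obtain rfl : p = pressure (fun E => φ (1 - E / E₀)) E₀ := funext hp
  obtain ⟨M, hM⟩ := hbd
  have hf : Measurable fun E => φ (1 - E / E₀) := hφ.comp (by fun_prop)
  have hξpos {κ : ℝ} (hκ : -1 < κ) : 0 < momentIntegral (fun E => φ (1 - E / E₀)) E₀ κ V :=
    momentIntegral_pos hκ hf (fun _ => hM _) (fun _ => hnn _) hV.1
      (volume_support_comp_one_sub_div_inter_Ioo_pos hE₀ hV.2 hδ hpos)
  have h32 := hξpos (κ := 3 / 2) (by norm_num)
  have h12 := hξpos (κ := 1 / 2) (by norm_num)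
  exact deriv_energyDensity_div_deriv_pressure hf (fun _ => hM _) hV (by positivity)

/-- Formula for `dρ/dp = ρ'(V)/p'(V)` from the proof of Theorem 4.1:
`ρ'(V)/p'(V) = 3(1 + (2ξ_{1/2} + ξ_{-1/2})/(4ξ_{3/2} + 3ξ_{1/2}))`. -/
theorem stmt_12 (E₀ : ℝ) (hE₀ : 0 < E₀) (φ : ℝ → ℝ)
    (hcont : Continuous φ) (hbd : ∃ M, ∀ x, |φ x| ≤ M)
    (hnn : ∀ x, 0 ≤ φ x) (hzero : ∀ x < (0 : ℝ), φ x = 0)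
    (δ : ℝ) (hδ : δ ∈ Set.Ioc (0 : ℝ) 1) (hpos : ∀ x ∈ Set.Ioo (0 : ℝ) δ, 0 < φ x)
    (ξ : ℝ → ℝ → ℝ)
    (hξ : ∀ κ V, ξ κ V =
      (4 * Real.pi / V) * ∫ E in V..E₀, φ (1 - E / E₀) * (E ^ 2 / V ^ 2 - 1) ^ κ)
    (ρ p : ℝ → ℝ)
    (hρ : ∀ V, ρ V = ξ (3/2) V + ξ (1/2) V)
    (hp : ∀ V, p V = (1/3) * ξ (3/2) V) :
    ∀ V ∈ Set.Ioo (0 : ℝ) E₀,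
      deriv ρ V / deriv p V =
        3 * (1 + (2 * ξ (1/2) V + ξ (-1/2) V) / (4 * ξ (3/2) V + 3 * ξ (1/2) V)) :=
  fun _ hV => stmt_12_general hE₀ hcont.measurable hbd hnn hδ.1 hpos hξ hρ hp hV
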